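/- Let (k : K → X, f : X → M) be a Schreier extension with K commutative and cancellative. Then the induced map ∗ also satisfies (A4): (m' · m) ∗ a = m' ∗ (m ∗ a) for all m, m' ∈ M and a ∈ K. Consequently ∗ is a monoid action of M on K, i.e. the map η : M → End(K), η(m)(a) = m ∗ a, is a monoid homomorphism into the endomorphism monoid of K. -/

import Mathlib

/-- A monoid extension: `K`, `X` additive monoids (not assumed commutative),
`M` a multiplicative monoid, `k : K → X` an injective monoid homomorphism whose image
is `{x | f x = 1}`, and `f : X → M` a surjective monoid homomorphism. -/
structure MonoidExtension {K X M : Type*} [AddMonoid K] [AddMonoid X] [Monoid M]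
    (k : K → X) (f : X → M) : Prop where
  k_add : ∀ a b : K, k (a + b) = k a + k b
  k_zero : k 0 = 0
  k_inj : Function.Injective k
  ker_eq : ∀ x : X, f x = 1 ↔ x ∈ Set.range k
  f_add : ∀ x y : X, f (x + y) = f x * f y
  f_zero : f 0 = 1
  f_surj : Function.Surjective f

/-- The set `B_m` of representatives of `m`. -/
def Reps {K X M : Type*} [AddMonoid K] [AddMonoid X] [Monoid M]
    (k : K → X) (f : X → M) (m : M) : Set X :=
  {u | f u = m ∧ ∀ x : X, f x = m → ∃! a : K, x = k a + u}

/-- A monoid extension is a Schreier extension if every `m` has a representative. -/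
def IsSchreier {K X M : Type*} [AddMonoid K] [AddMonoid X] [Monoid M]
    (k : K → X) (f : X → M) : Prop :=
  ∀ m : M, (Reps k f m).Nonempty

/-
If `v + u = k c + w` with `u`, `v`, `w` representatives of `m`, `m'`, `m' * m`, then moving `k a`
to the left through both sides gives `c + (m' * m) ∗ a = m' ∗ (m ∗ a) + c`. Thus multiplicativity
holds up to the factor `c`, which a commutative cancellative `K` allows one to cancel.
-/

/-- `star` is the map `∗` induced by the extension: `m ∗ a` is the element `b` of `K` with
`u + k a = k b + u` for every representative `u` of `m`. It is encoded as a property of a given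
map rather than as a function picked by choice. -/
def IsInducedMap {K X M : Type*} [AddMonoid K] [AddMonoid X] [Monoid M]
    (k : K → X) (f : X → M) (star : M → K → K) : Prop :=
  ∀ (m : M) (a : K) (u : X), u ∈ Reps k f m → u + k a = k (star m a) + u

section AddMonoid

variable {K X M : Type*} [AddMonoid K] [AddMonoid X] [Monoid M]
  {k : K → X} {f : X → M} {star : M → K → K} {m m' : M} {u v w : X}

namespace MonoidExtension

theorem f_k (hE : MonoidExtension k f) (a : K) : f (k a) = 1 :=
  (hE.ker_eq (k a)).2 ⟨a, rfl⟩

theorem k_add_injective_of_mem_reps (hE : MonoidExtension k f) (hu : u ∈ Reps k f m) :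
    Function.Injective fun a => k a + u := by
  intro a b hab
  have hf : f (k a + u) = m := by rw [hE.f_add, hE.f_k, one_mul, hu.1]
  exact (hu.2 _ hf).unique rfl hab

theorem zero_mem_reps_one (hE : MonoidExtension k f) : 0 ∈ Reps k f 1 := by
  refine ⟨hE.f_zero, fun x hx => ?_⟩
  obtain ⟨a, rfl⟩ := (hE.ker_eq x).1 hx
  simp only [add_zero]
  exact ⟨a, rfl, fun b hb => hE.k_inj hb.symm⟩

end MonoidExtension

namespace IsInducedMap

theorem one_apply (h : IsInducedMap k f star) (hE : MonoidExtension k f) (a : K) :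
    star 1 a = a := by
  have h_zero : 0 + k a = k (star 1 a) + 0 := h 1 a 0 hE.zero_mem_reps_one
  rw [zero_add, add_zero] at h_zero
  exact (hE.k_inj h_zero).symm

theorem apply_zero (h : IsInducedMap k f star) (hE : MonoidExtension k f)
    (hu : u ∈ Reps k f m) : star m 0 = 0 := by
  apply hE.k_add_injective_of_mem_reps hu
  calc k (star m 0) + u = u + k 0 := (h m 0 u hu).symm
    _ = k 0 + u := by rw [hE.k_zero, add_zero, zero_add]

theorem apply_add (h : IsInducedMap k f star) (hE : MonoidExtension k f)
    (hu : u ∈ Reps k f m) (a b : K) : star m (a + b) = star m a + star m b := by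
  apply hE.k_add_injective_of_mem_reps hu
  calc k (star m (a + b)) + u = u + k (a + b) := (h m (a + b) u hu).symm
    _ = u + k a + k b := by rw [hE.k_add, add_assoc]
    _ = k (star m a) + (u + k b) := by rw [h m a u hu, add_assoc]
    _ = k (star m a + star m b) + u := by rw [h m b u hu, hE.k_add, add_assoc]

theorem add_mul_apply_eq_apply_apply_add (h : IsInducedMap k f star)
    (hE : MonoidExtension k f) (hu : u ∈ Reps k f m) (hv : v ∈ Reps k f m')
    (hw : w ∈ Reps k f (m' * m)) {c : K} (hc : v + u = k c + w) (a : K) :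
    c + star (m' * m) a = star m' (star m a) + c := by
  apply hE.k_add_injective_of_mem_reps hw
  calc k (c + star (m' * m) a) + w = k c + (w + k a) := by
        rw [hE.k_add, add_assoc, h _ a w hw]
    _ = v + (u + k a) := by rw [← add_assoc, ← hc, add_assoc]
    _ = v + k (star m a) + u := by rw [h m a u hu, add_assoc]
    _ = k (star m' (star m a)) + (v + u) := by rw [h m' _ v hv, add_assoc]
    _ = k (star m' (star m a) + c) + w := by rw [hc, hE.k_add, add_assoc]

end IsInducedMap

end AddMonoid

namespace IsInducedMap

variable {K X M : Type*} [AddCommMonoid K] [IsCancelAdd K] [AddMonoid X] [Monoid M]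
  {k : K → X} {f : X → M} {star : M → K → K}

theorem mul_apply (h : IsInducedMap k f star) (hE : MonoidExtension k f)
    (hS : IsSchreier k f) (m' m : M) (a : K) :
    star (m' * m) a = star m' (star m a) := by
  obtain ⟨u, hu⟩ := hS m
  obtain ⟨v, hv⟩ := hS m'
  obtain ⟨w, hw⟩ := hS (m' * m)
  have hvu : f (v + u) = m' * m := by rw [hE.f_add, hv.1, hu.1]
  obtain ⟨c, hc⟩ := (hw.2 (v + u) hvu).exists
  have h_twisted := h.add_mul_apply_eq_apply_apply_add hE hu hv hw hc a
  rw [add_comm] at h_twisted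
  exact add_right_cancel h_twisted

/-- The monoid homomorphism `η : M → End(K)`, `η(m)(a) = m ∗ a`, given by the induced map of a
Schreier extension. -/
def toEnd (h : IsInducedMap k f star) (hE : MonoidExtension k f) (hS : IsSchreier k f) :
    M →* AddMonoid.End K where
  toFun m :=
    { toFun := star m
      map_zero' := h.apply_zero hE (hS m).some_mem
      map_add' := h.apply_add hE (hS m).some_mem }
  map_one' := AddMonoidHom.ext (h.one_apply hE)
  map_mul' m' m := AddMonoidHom.ext (h.mul_apply hE hS m' m)

end IsInducedMap

/-- Proposition 3.1 (prop:monoid action), second part: for a Schreier extension with `K`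
commutative and cancellative, the induced map `∗` also satisfies axiom (A4), and hence
defines a monoid action of `M` on `K`, i.e. a monoid homomorphism
`η : M →* AddMonoid.End K` with `η m a = m ∗ a`. -/
theorem action_axiom_A4 {K X M : Type*} [AddCommMonoid K] [IsCancelAdd K]
    [AddMonoid X] [Monoid M]
    (k : K → X) (f : X → M) (hE : MonoidExtension k f) (hS : IsSchreier k f)
    (star : M → K → K)
    (hstar : ∀ (m : M) (a : K) (u : X), u ∈ Reps k f m → u + k a = k (star m a) + u) :
    (∀ (m m' : M) (a : K), star (m' * m) a = star m' (star m a)) ∧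
    (∃ η : M →* AddMonoid.End K, ∀ (m : M) (a : K), η m a = star m a) := by
  have h_induced : IsInducedMap k f star := hstar
  exact ⟨fun m m' => h_induced.mul_apply hE hS m' m, h_induced.toEnd hE hS, fun _ _ => rfl⟩
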